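/- arXiv:1411.3823 — 2 statements merged into one kernel-verified Lean document; each statement's English description precedes it below -/
import Mathlib

section
/- Let p be a prime, k ≥ 1 an integer with p^{a-1} ≤ k < p^a and most significant base-p digit κ_{a-1}. Define β_k(x) = e^{2πi φ_p(k) φ_p^+(x)} for x ∈ [0,1) (with the product taken modulo 1, using the p-adic pairing). Then ∫₀¹∫₀¹ |x − y| conj(β_k(x)) β_k(y) dx dy = p^{-2a}(1/3 − 1/sin²(κ_{a-1}π/p)). -/
/-- The `r`-th base-`p` digit of `x ∈ [0,1)` (finite expansion for `p`-adic rationals). -/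
noncomputable def padDigit (p : ℕ) (x : ℝ) (r : ℕ) : ℕ := ⌊x * (p : ℝ) ^ (r + 1)⌋.toNat % p

/-- The inverse Monna map `φ_p^+ : [0,1) → ℤ_p`, sending
`x = ∑ x_r p^{-(r+1)}` (finite expansion for `p`-adic rationals) to `∑ x_r p^r`. -/
noncomputable def phiPlus (p : ℕ) [Fact p.Prime] (x : ℝ) : ℤ_[p] :=
  ∑' r : ℕ, (padDigit p x r : ℤ_[p]) * (p : ℤ_[p]) ^ r

/-- The radical inverse function `φ_p : ℕ → [0,1)` in base `p`. -/
noncomputable def radInv (p : ℕ) (k : ℕ) : ℝ :=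
  ∑ i ∈ Finset.range (Nat.log p k + 1), (k / p ^ i % p : ℕ) / (p : ℝ) ^ (i + 1)

/-- The `p`-adic character `χ_k(z) = e^{2πi φ_p(k) z}`, where the product
`φ_p(k)·z` is taken modulo one: since `φ_p(k)` has denominator `p^a` with
`a = log_p k + 1`, only `z` modulo `p^a` (its approximation `z.appr a`) matters. -/
noncomputable def padChar (p : ℕ) [Fact p.Prime] (k : ℕ) (z : ℤ_[p]) : ℂ :=
  Complex.exp (2 * Real.pi * Complex.I *
    (radInv p k * (z.appr (Nat.log p k + 1) : ℝ)))

/-- The `p`-adic function `β_k(x) = χ_k(φ_p^+(x))`. -/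
noncomputable def padBeta (p : ℕ) [Fact p.Prime] (k : ℕ) (x : ℝ) : ℂ :=
  padChar p k (phiPlus p x)

/-- The Monna map `φ_p : ℤ_p → [0,1)`, sending `∑ z_r p^r` to `∑ z_r p^{-(r+1)} (mod 1)`. -/
noncomputable def monna (p : ℕ) [Fact p.Prime] (z : ℤ_[p]) : ℝ :=
  Int.fract (∑' r : ℕ, ((z.appr (r + 1) / p ^ r : ℕ) : ℝ) / (p : ℝ) ^ (r + 1))

/-- The `p`-adic shift `x ⊕_p σ = φ_p(φ_p^+(x) + φ_p^+(σ))`. -/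
noncomputable def oplus (p : ℕ) [Fact p.Prime] (x σ : ℝ) : ℝ :=
  monna p (phiPlus p x + phiPlus p σ)

/-- The inverse `p`-adic shift `x ⊖_p σ = φ_p(φ_p^+(x) - φ_p^+(σ))`. -/
noncomputable def ominus (p : ℕ) [Fact p.Prime] (x σ : ℝ) : ℝ :=
  monna p (phiPlus p x - phiPlus p σ)

theorem PadicInt.appr_tsum_mul_pow {p : ℕ} [hp : Fact p.Prime] {d : ℕ → ℕ}
    (hd : ∀ r, d r < p) (n : ℕ) :
    (∑' r : ℕ, (d r : ℤ_[p]) * (p : ℤ_[p]) ^ r).appr n = ∑ r ∈ Finset.range n, d r * p ^ r := by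
  have hs : ∀ e : ℕ → ℕ, Summable fun r : ℕ => (e r : ℤ_[p]) * (p : ℤ_[p]) ^ r := by
    intro e
    refine Summable.of_norm_bounded (g := fun r => ((p : ℝ)⁻¹) ^ r) ?_ ?_
    · refine summable_geometric_of_lt_one (by positivity) ?_
      exact inv_lt_one_of_one_lt₀ (by exact_mod_cast hp.out.one_lt)
    · intro r
      rw [norm_mul, norm_pow, PadicInt.norm_p]
      exact mul_le_of_le_one_left (by positivity) (PadicInt.norm_le_one _)
  have hlt : ∑ r ∈ Finset.range n, d r * p ^ r < p ^ n := by
    induction n with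
    | zero => simp
    | succ n ih =>
      rw [Finset.sum_range_succ, pow_succ]
      have := Nat.mul_le_mul_right (p ^ n) (Nat.succ_le_of_lt (hd n))
      rw [Nat.succ_mul] at this
      linarith [mul_comm p (p ^ n)]
  set z := ∑' r : ℕ, (d r : ℤ_[p]) * (p : ℤ_[p]) ^ r with hz
  have hmem : z - ((∑ r ∈ Finset.range n, d r * p ^ r : ℕ) : ℤ_[p]) ∈
      Ideal.span {(p : ℤ_[p]) ^ n} := by
    rw [Ideal.mem_span_singleton, hz, ← (hs d).sum_add_tsum_nat_add n]
    push_cast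
    rw [add_sub_cancel_left]
    refine ⟨∑' r : ℕ, (d (r + n) : ℤ_[p]) * (p : ℤ_[p]) ^ r, ?_⟩
    rw [← (hs fun r => d (r + n)).tsum_mul_left]
    exact tsum_congr fun r => by ring
  have h := PadicInt.zmod_congr_of_sub_mem_span n z _ _ (z.appr_spec n) hmem
  rw [ZMod.natCast_eq_natCast_iff'] at h
  rwa [Nat.mod_eq_of_lt (z.appr_lt n), Nat.mod_eq_of_lt hlt] at h

theorem floor_mul_pow_toNat {p : ℕ} (hp : 0 < p) {m r u : ℕ} (hr : r ≤ m) {x : ℝ}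
    (hu : ⌊x * (p : ℝ) ^ (m + 1)⌋₊ = u) :
    ⌊x * (p : ℝ) ^ (r + 1)⌋.toNat = u / p ^ (m - r) := by
  rw [Int.floor_toNat, ← hu, ← Nat.floor_div_natCast]
  congr 1
  have h : (p : ℝ) ^ (m + 1) = (p : ℝ) ^ (r + 1) * (p : ℝ) ^ (m - r) := by
    rw [← pow_add]; congr 1; omega
  have hp' : (p : ℝ) ≠ 0 := by positivity
  rw [h]
  push_cast
  field_simp

/-- The integer obtained from `q` by reversing its `m` lowest base-`p` digits. -/
def digitReverse (p m q : ℕ) : ℕ := ∑ r ∈ Finset.range m, q / p ^ (m - 1 - r) % p * p ^ r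

theorem appr_phiPlus {p : ℕ} [hp : Fact p.Prime] {m q c : ℕ} (hc : c < p) {x : ℝ}
    (hu : ⌊x * (p : ℝ) ^ (m + 1)⌋₊ = q * p + c) :
    (phiPlus p x).appr (m + 1) = digitReverse p m q + c * p ^ m := by
  rw [phiPlus, PadicInt.appr_tsum_mul_pow (d := padDigit p x) (fun r => Nat.mod_lt _ hp.out.pos),
    Finset.sum_range_succ, digitReverse]
  congr 1
  · refine Finset.sum_congr rfl fun r hr => ?_
    have hr' := Finset.mem_range.1 hr
    rw [padDigit, floor_mul_pow_toNat hp.out.pos hr'.le hu,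
      show m - r = 1 + (m - 1 - r) by omega, pow_add, pow_one, ← Nat.div_div_eq_div_mul,
      mul_comm q p, Nat.mul_add_div hp.out.pos, Nat.div_eq_of_lt hc, add_zero]
  · rw [padDigit, floor_mul_pow_toNat hp.out.pos le_rfl hu]
    simp [Nat.mod_eq_of_lt hc]

theorem exp_radInv_mul_pow {p : ℕ} (hp : p.Prime) (k : ℕ) :
    Complex.exp (2 * Real.pi * Complex.I * (radInv p k * (p : ℝ) ^ Nat.log p k)) =
      Complex.exp (2 * Real.pi * Complex.I * ((k / p ^ Nat.log p k : ℕ) / p)) := by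
  set m := Nat.log p k with hm
  have hp0 : (p : ℂ) ≠ 0 := by exact_mod_cast hp.ne_zero
  have hlt : k / p ^ m < p :=
    Nat.div_lt_of_lt_mul (by rw [← pow_succ]; exact Nat.lt_pow_succ_log_self hp.one_lt k)
  have hr : (radInv p k * (p : ℝ) ^ m : ℂ) =
      (∑ i ∈ Finset.range m, k / p ^ i % p * p ^ (m - 1 - i) : ℕ) + (k / p ^ m : ℕ) / (p : ℂ) := by
    rw [radInv, ← hm, Finset.sum_range_succ, Nat.mod_eq_of_lt hlt]
    push_cast
    rw [add_mul, Finset.sum_mul]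
    congr 1
    · refine Finset.sum_congr rfl fun i hi => ?_
      have hi' := Finset.mem_range.1 hi
      rw [show (p : ℂ) ^ m = (p : ℂ) ^ (i + 1) * (p : ℂ) ^ (m - 1 - i) by
        rw [← pow_add]; congr 1; omega]
      field_simp
    · rw [pow_succ]
      field_simp
  rw [hr, mul_add, Complex.exp_add, mul_comm (2 * Real.pi * Complex.I) (Nat.cast _),
    Complex.exp_nat_mul_two_pi_mul_I, one_mul]

theorem padBeta_eq {p k : ℕ} [hp : Fact p.Prime] {q c : ℕ} (hc : c < p)
    {x : ℝ} (hu : ⌊x * (p : ℝ) ^ (Nat.log p k + 1)⌋₊ = q * p + c) :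
    padBeta p k x =
      Complex.exp ((2 * Real.pi * (radInv p k * digitReverse p (Nat.log p k) q) : ℝ) * Complex.I) *
      Complex.exp (2 * Real.pi * Complex.I * ((k / p ^ Nat.log p k : ℕ) / p)) ^ c := by
  rw [padBeta, padChar, appr_phiPlus hc hu, ← exp_radInv_mul_pow hp.out, ← Complex.exp_nat_mul,
    ← Complex.exp_add]
  congr 1
  push_cast
  ring

theorem sum_range_mul_pow_eq {ω : ℂ} {p : ℕ} (h1 : ω ≠ 1) (hω : ω ^ p = 1) :
    ∑ d ∈ Finset.range p, (d : ℂ) * ω ^ d = p / (ω - 1) := by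
  have h : ∀ n : ℕ, (∑ d ∈ Finset.range n, (d : ℂ) * ω ^ d) * (ω - 1) ^ 2 =
      n * ω ^ n * (ω - 1) - ω * (ω ^ n - 1) := by
    intro n
    induction n with
    | zero => simp
    | succ n ih =>
      rw [Finset.sum_range_succ, add_mul, ih]
      push_cast
      ring
  have h0 : ω - 1 ≠ 0 := sub_ne_zero.2 h1
  have := h p
  rw [hω] at this
  rw [eq_div_iff h0]
  refine mul_right_cancel₀ h0 ?_
  linear_combination this

theorem sum_range_sub_mul_pow (ω : ℂ) (c : ℕ) :
    (∑ d ∈ Finset.range c, ((c : ℂ) - d) * ω ^ d) * (ω - 1) ^ 2 =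
      ω ^ (c + 1) - (c + 1) * ω + c := by
  induction c with
  | zero => simp
  | succ c ih =>
    have h : ∑ d ∈ Finset.range (c + 1), (((c + 1 : ℕ) : ℂ) - d) * ω ^ d =
        ∑ d ∈ Finset.range c, ((c : ℂ) - d) * ω ^ d + ∑ d ∈ Finset.range (c + 1), ω ^ d := by
      rw [← add_zero (∑ d ∈ Finset.range c, ((c : ℂ) - d) * ω ^ d),
        show (0 : ℂ) = ((c : ℂ) - c) * ω ^ c by simp, ← Finset.sum_range_succ,
        ← Finset.sum_add_distrib]
      exact Finset.sum_congr rfl fun d _ => by push_cast; ring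
    have hg := geom_sum_mul ω (c + 1)
    rw [h, add_mul, ih]
    push_cast
    linear_combination (ω - 1) * hg

theorem sum_abs_sub_mul_pow {ω : ℂ} {p c : ℕ} (h1 : ω ≠ 1) (hω : ω ^ p = 1) (hc : c < p) :
    (∑ d ∈ Finset.range p, ((|(c : ℝ) - d| : ℝ) : ℂ) * ω ^ d) * (ω - 1) ^ 2 =
      p * (ω - 1) + 2 * (ω ^ (c + 1) - (c + 1) * ω + c) := by
  have h0 : ω - 1 ≠ 0 := sub_ne_zero.2 h1
  have hg : ∑ d ∈ Finset.range p, ω ^ d = 0 := by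
    have := geom_sum_mul ω p
    rw [hω, sub_self] at this
    exact (mul_eq_zero.1 this).resolve_right h0
  have hsplit : ∑ d ∈ Finset.range p, ((|(c : ℝ) - d| : ℝ) : ℂ) * ω ^ d =
      (∑ d ∈ Finset.range p, (d : ℂ) * ω ^ d - c * ∑ d ∈ Finset.range p, ω ^ d) +
        2 * ∑ d ∈ Finset.range c, ((c : ℂ) - d) * ω ^ d := by
    have hfil : Finset.range c = (Finset.range p).filter (· < c) := by
      ext d; simp only [Finset.mem_range, Finset.mem_filter]; omega
    rw [hfil, Finset.sum_filter, Finset.mul_sum, Finset.mul_sum, ← Finset.sum_sub_distrib,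
      ← Finset.sum_add_distrib]
    refine Finset.sum_congr rfl fun d _ => ?_
    split_ifs with h
    · have : (d : ℝ) ≤ c := by exact_mod_cast h.le
      rw [abs_of_nonneg (by linarith)]; push_cast; ring
    · have : (c : ℝ) ≤ d := by exact_mod_cast not_lt.1 h
      rw [abs_of_nonpos (by linarith)]; push_cast; ring
  rw [hsplit, hg, sum_range_mul_pow_eq h1 hω, add_mul, mul_assoc, sum_range_sub_mul_pow]
  field_simp
  ring

theorem sum_sum_abs_sub_mul_pow {ω ν : ℂ} {p : ℕ} (h1 : ω ≠ 1) (hω : ω ^ p = 1) (hν : ν * ω = 1) :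
    ∑ c ∈ Finset.range p, ∑ d ∈ Finset.range p, ((|(c : ℝ) - d| : ℝ) : ℂ) * (ν ^ c * ω ^ d) =
      4 * p * ω / (ω - 1) ^ 2 := by
  have h0 : ω - 1 ≠ 0 := sub_ne_zero.2 h1
  have hν1 : ν ≠ 1 := by rintro rfl; exact h1 (by simpa using hν)
  have hνp : ν ^ p = 1 := by
    have := congrArg (· ^ p) hν
    simpa [mul_pow, hω] using this
  have hg : ∑ d ∈ Finset.range p, ν ^ d = 0 := by
    have := geom_sum_mul ν p
    rw [hνp, sub_self] at this
    exact (mul_eq_zero.1 this).resolve_right (sub_ne_zero.2 hν1)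
  have hs := sum_range_mul_pow_eq hν1 hνp
  rw [eq_div_iff (sub_ne_zero.2 hν1)] at hs
  rw [eq_div_iff (pow_ne_zero 2 h0), Finset.sum_mul]
  have : ∀ c ∈ Finset.range p, (∑ d ∈ Finset.range p, ((|(c : ℝ) - d| : ℝ) : ℂ) * (ν ^ c * ω ^ d)) *
      (ω - 1) ^ 2 = (p * (ω - 1) - 2 * ω) * ν ^ c + 2 * ω + 2 * (1 - ω) * (c * ν ^ c) := by
    intro c hc
    have h := sum_abs_sub_mul_pow h1 hω (Finset.mem_range.1 hc)
    have hνc : ν ^ c * ω ^ c = 1 := by rw [← mul_pow, hν, one_pow]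
    calc _ = ν ^ c * ((∑ d ∈ Finset.range p, ((|(c : ℝ) - d| : ℝ) : ℂ) * ω ^ d) * (ω - 1) ^ 2) := by
          rw [← mul_assoc, Finset.mul_sum]
          congr 1
          exact Finset.sum_congr rfl fun d _ => by ring
      _ = _ := by
          rw [h]
          linear_combination 2 * ω * hνc
  rw [Finset.sum_congr rfl this, Finset.sum_add_distrib, Finset.sum_add_distrib,
    ← Finset.mul_sum _ _ (2 * (1 - ω)), ← Finset.mul_sum, hg, Finset.sum_const, Finset.card_range, nsmul_eq_mul]
  linear_combination (2 * ω) * hs - 2 * (∑ d ∈ Finset.range p, (d : ℂ) * ν ^ d) * hν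

theorem sum_sum_abs_add_sub_mul_pow {ω ν : ℂ} {p : ℕ} (hω : ∑ d ∈ Finset.range p, ω ^ d = 0)
    (hν : ∑ d ∈ Finset.range p, ν ^ d = 0) {q r : ℕ} (hqr : q ≠ r) :
    ∑ c ∈ Finset.range p, ∑ d ∈ Finset.range p,
      ((|((q * p + c : ℕ) : ℝ) - (r * p + d : ℕ)| : ℝ) : ℂ) * (ν ^ c * ω ^ d) = 0 := by
  obtain ⟨s, hs⟩ : ∃ s : ℂ, ∀ c ∈ Finset.range p, ∀ d ∈ Finset.range p,
      ((|((q * p + c : ℕ) : ℝ) - (r * p + d : ℕ)| : ℝ) : ℂ) = s * ((q * p - r * p + c) - d) := by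
    rcases lt_or_gt_of_ne hqr with h | h
    · refine ⟨-1, fun c hc d _ => ?_⟩
      have : q * p + c ≤ r * p + d := by
        nlinarith [Finset.mem_range.1 hc, Nat.mul_le_mul_right p (Nat.succ_le_of_lt h)]
      rw [abs_of_nonpos (sub_nonpos.2 (by exact_mod_cast this))]
      push_cast; ring
    · refine ⟨1, fun c _ d hd => ?_⟩
      have : r * p + d ≤ q * p + c := by
        nlinarith [Finset.mem_range.1 hd, Nat.mul_le_mul_right p (Nat.succ_le_of_lt h)]
      rw [abs_of_nonneg (sub_nonneg.2 (by exact_mod_cast this))]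
      push_cast; ring
  calc _ = ∑ c ∈ Finset.range p, ((s * ((q * p - r * p + c)) * ν ^ c) *
        ∑ d ∈ Finset.range p, ω ^ d - s * ν ^ c * ∑ d ∈ Finset.range p, d * ω ^ d) := by
        refine Finset.sum_congr rfl fun c hc => ?_
        rw [Finset.mul_sum, Finset.mul_sum, ← Finset.sum_sub_distrib]
        refine Finset.sum_congr rfl fun d hd => ?_
        rw [hs c hc d hd]; ring
    _ = -(s * ∑ d ∈ Finset.range p, d * ω ^ d) * ∑ c ∈ Finset.range p, ν ^ c := by
        rw [hω, Finset.mul_sum]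
        exact Finset.sum_congr rfl fun c _ => by ring
    _ = 0 := by rw [hν, mul_zero]

theorem Finset.sum_range_mul_eq {M : Type*} [AddCommMonoid M] (f : ℕ → M) (n p : ℕ) :
    ∑ u ∈ Finset.range (n * p), f u =
      ∑ q ∈ Finset.range n, ∑ c ∈ Finset.range p, f (q * p + c) := by
  induction n with
  | zero => simp
  | succ n ih => rw [Nat.succ_mul, Finset.sum_range_add, ih, Finset.sum_range_succ]

theorem sum_sum_abs_sub_conj_mul {ω : ℂ} {p n : ℕ} (h1 : ω ≠ 1) (hω : ω ^ p = 1)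
    (hn : ‖ω‖ = 1) {A B : ℕ → ℂ} (hA : ∀ q, ‖A q‖ = 1)
    (hB : ∀ q, ∀ c < p, B (q * p + c) = A q * ω ^ c) :
    ∑ u ∈ Finset.range (n * p), ∑ v ∈ Finset.range (n * p),
      ((|(u : ℝ) - v| : ℝ) : ℂ) * ((starRingEnd ℂ) (B u) * B v) = n * (4 * p * ω / (ω - 1) ^ 2) := by
  set ν := (starRingEnd ℂ) ω with hνdef
  have hν : ν * ω = 1 := by rw [hνdef, Complex.conj_mul', hn]; simp
  have hν1 : ν ≠ 1 := by intro h; rw [h, one_mul] at hν; exact h1 hν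
  have hνp : ν ^ p = 1 := by rw [hνdef, ← map_pow, hω, map_one]
  have hgeom : ∀ z : ℂ, z ≠ 1 → z ^ p = 1 → ∑ d ∈ Finset.range p, z ^ d = 0 := by
    intro z hz hzp
    have := geom_sum_mul z p
    rw [hzp, sub_self] at this
    exact (mul_eq_zero.1 this).resolve_right (sub_ne_zero.2 hz)
  have hblock : ∀ q r : ℕ, ∑ c ∈ Finset.range p, ∑ d ∈ Finset.range p,
      ((|((q * p + c : ℕ) : ℝ) - (r * p + d : ℕ)| : ℝ) : ℂ) *
        ((starRingEnd ℂ) (B (q * p + c)) * B (r * p + d)) =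
      if q = r then 4 * p * ω / (ω - 1) ^ 2 else 0 := by
    intro q r
    have : ∑ c ∈ Finset.range p, ∑ d ∈ Finset.range p,
      ((|((q * p + c : ℕ) : ℝ) - (r * p + d : ℕ)| : ℝ) : ℂ) *
        ((starRingEnd ℂ) (B (q * p + c)) * B (r * p + d)) =
      ((starRingEnd ℂ) (A q) * A r) * ∑ c ∈ Finset.range p, ∑ d ∈ Finset.range p,
        ((|((q * p + c : ℕ) : ℝ) - (r * p + d : ℕ)| : ℝ) : ℂ) * (ν ^ c * ω ^ d) := by
      rw [Finset.mul_sum]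
      refine Finset.sum_congr rfl fun c hc => ?_
      rw [Finset.mul_sum]
      refine Finset.sum_congr rfl fun d hd => ?_
      rw [hB q c (Finset.mem_range.1 hc), hB r d (Finset.mem_range.1 hd), map_mul, map_pow]
      ring
    rw [this]
    split_ifs with h
    · subst h
      rw [Complex.conj_mul', hA, ← sum_sum_abs_sub_mul_pow h1 hω hν]
      push_cast
      simp only [add_sub_add_left_eq_sub, one_pow, one_mul]
    · rw [sum_sum_abs_add_sub_mul_pow (hgeom ω h1 hω) (hgeom ν hν1 hνp) h, mul_zero]
  calc _ = ∑ q ∈ Finset.range n, ∑ r ∈ Finset.range n, if q = r then 4 * p * ω / (ω - 1) ^ 2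
        else 0 := by
        rw [Finset.sum_range_mul_eq]
        refine Finset.sum_congr rfl fun q _ => ?_
        simp only [Finset.sum_range_mul_eq _ n p]
        rw [Finset.sum_comm]
        exact Finset.sum_congr rfl fun r _ => hblock q r
    _ = _ := by simp +contextual [Finset.sum_ite_eq]

open MeasureTheory in
theorem setIntegral_Ico_eq_sum_blocks {N : ℕ} (hN : 0 < N) {f : ℝ → ℂ} {g : ℕ → ℝ → ℂ}
    (hg : ∀ u, Continuous (g u))
    (hfg : ∀ u < N, ∀ x ∈ Set.Ico ((u : ℝ) / N) (((u + 1 : ℕ) : ℝ) / N), f x = g u x) :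
    ∫ x in Set.Ico (0 : ℝ) 1, f x =
      ∑ u ∈ Finset.range N, ∫ x in ((u : ℝ) / N)..(((u + 1 : ℕ) : ℝ) / N), g u x := by
  have hle : ∀ u : ℕ, (u : ℝ) / N ≤ ((u + 1 : ℕ) : ℝ) / N := fun u => by gcongr; simp
  have hint : ∀ u < N, IntervalIntegrable f volume ((u : ℝ) / N) (((u + 1 : ℕ) : ℝ) / N) := by
    intro u hu
    rw [intervalIntegrable_iff_integrableOn_Ico_of_le (hle u)]
    have := (hg u).intervalIntegrable (μ := volume) ((u : ℝ) / N) (((u + 1 : ℕ) : ℝ) / N)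
    rw [intervalIntegrable_iff_integrableOn_Ico_of_le (hle u)] at this
    exact this.congr_fun (fun x hx => (hfg u hu x hx).symm) measurableSet_Ico
  have hsum := intervalIntegral.sum_integral_adjacent_intervals (a := fun u : ℕ => (u : ℝ) / N) hint
  have hN' : (N : ℝ) ≠ 0 := by positivity
  simp only [Nat.cast_zero, zero_div, div_self hN'] at hsum
  rw [integral_Ico_eq_integral_Ioc, ← intervalIntegral.integral_of_le zero_le_one, ← hsum]
  refine Finset.sum_congr rfl fun u hu => ?_
  rw [intervalIntegral.integral_of_le (hle u), intervalIntegral.integral_of_le (hle u),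
    ← integral_Ico_eq_integral_Ioc, ← integral_Ico_eq_integral_Ioc]
  exact setIntegral_congr_fun measurableSet_Ico fun x hx => hfg u (Finset.mem_range.1 hu) x hx

theorem hasDerivAt_mul_abs_div_two (x : ℝ) : HasDerivAt (fun t : ℝ => t * |t| / 2) |x| x := by
  refine hasDerivAt_of_hasDerivAt_of_ne' (f := fun t : ℝ => t * |t| / 2) (g := fun t => |t|)
    (y := x) (x := 0) (fun y hy => ?_) (by fun_prop) (by fun_prop)
  refine (((hasDerivAt_id y).mul (hasDerivAt_abs hy)).div_const 2).congr_deriv ?_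
  rcases lt_or_gt_of_ne hy with h | h
  · simp [h, abs_of_neg]
  · simp [h, abs_of_pos]

theorem hasDerivAt_abs_cube_div_six (x : ℝ) :
    HasDerivAt (fun t : ℝ => |t| ^ 3 / 6) (x * |x| / 2) x := by
  refine hasDerivAt_of_hasDerivAt_of_ne' (f := fun t : ℝ => |t| ^ 3 / 6)
    (g := fun t => t * |t| / 2) (y := x) (x := 0) (fun y hy => ?_) (by fun_prop) (by fun_prop)
  refine (((hasDerivAt_abs hy).pow 3).div_const 6).congr_deriv ?_
  rcases lt_or_gt_of_ne hy with h | h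
  · simp [h, abs_of_neg]; ring
  · simp [h, abs_of_pos]; ring

theorem integral_abs_sub (a b x : ℝ) :
    ∫ y in a..b, |x - y| = (b - x) * |b - x| / 2 - (a - x) * |a - x| / 2 := by
  refine intervalIntegral.integral_eq_sub_of_hasDerivAt
    (f := fun y => (y - x) * |y - x| / 2) (fun y _ => ?_)
    (Continuous.intervalIntegrable (by fun_prop) _ _)
  rw [abs_sub_comm]
  exact (hasDerivAt_mul_abs_div_two (y - x)).comp_sub_const y x

theorem integral_integral_abs_sub (a b c d : ℝ) :
    ∫ x in c..d, ∫ y in a..b, |x - y| =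
      (|b - c| ^ 3 - |b - d| ^ 3 - |a - c| ^ 3 + |a - d| ^ 3) / 6 := by
  simp only [integral_abs_sub]
  have h : ∀ b : ℝ, ∫ x in c..d, (b - x) * |b - x| / 2 = |b - c| ^ 3 / 6 - |b - d| ^ 3 / 6 := by
    intro b
    rw [intervalIntegral.integral_eq_sub_of_hasDerivAt
      (f := fun x => -(|b - x| ^ 3 / 6)) (fun x _ => ?_)
      (Continuous.intervalIntegrable (by fun_prop) _ _)]
    · ring
    · exact ((hasDerivAt_abs_cube_div_six (b - x)).comp_const_sub b x).fun_neg.congr_deriv (neg_neg _)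
  rw [intervalIntegral.integral_sub (Continuous.intervalIntegrable (by fun_prop) _ _)
    (Continuous.intervalIntegrable (by fun_prop) _ _), h, h]
  ring

theorem integral_integral_abs_sub_blocks {N : ℕ} (hN : 0 < N) (u v : ℕ) :
    ∫ x in ((u : ℝ) / N)..(((u + 1 : ℕ) : ℝ) / N),
        ∫ y in ((v : ℝ) / N)..(((v + 1 : ℕ) : ℝ) / N), |x - y| =
      (|(u : ℝ) - v| + if u = v then 1 / 3 else 0) / (N : ℝ) ^ 3 := by
  have hN' : (0 : ℝ) < N := by exact_mod_cast hN
  rw [integral_integral_abs_sub]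
  simp only [← sub_div, abs_div, abs_of_pos hN', div_pow]
  push_cast
  have h : |(v : ℝ) + 1 - u| ^ 3 - |(v : ℝ) + 1 - (u + 1)| ^ 3 - |(v : ℝ) - u| ^ 3 +
      |(v : ℝ) - (u + 1)| ^ 3 = 6 * (|(u : ℝ) - v| + if u = v then 1 / 3 else 0) := by
    rcases lt_trichotomy u v with h | h | h
    · have h' : (u : ℝ) + 1 ≤ v := by exact_mod_cast h
      rw [if_neg h.ne, abs_of_nonneg (by linarith), abs_of_nonneg (by linarith),
        abs_of_nonneg (by linarith), abs_of_nonneg (by linarith), abs_of_nonpos (by linarith)]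
      ring
    · subst h
      norm_num
    · have h' : (v : ℝ) + 1 ≤ u := by exact_mod_cast h
      rw [if_neg h.ne', abs_of_nonpos (by linarith), abs_of_nonpos (by linarith),
        abs_of_nonpos (by linarith), abs_of_nonpos (by linarith), abs_of_nonneg (by linarith)]
      ring
  field_simp
  linear_combination h

theorem exp_two_mul_mul_I_sub_one_sq (θ : ℂ) :
    (Complex.exp (2 * θ * Complex.I) - 1) ^ 2 =
      -4 * Complex.sin θ ^ 2 * Complex.exp (2 * θ * Complex.I) := by
  rw [Complex.sin, neg_mul θ, Complex.exp_neg, mul_assoc 2, two_mul (θ * Complex.I), Complex.exp_add]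
  have h := Complex.exp_ne_zero (θ * Complex.I)
  field_simp
  rw [Complex.I_sq]
  ring

/-- The double integral of `|x - y|` against a step function on `N` equal blocks. -/
theorem integral_integral_abs_sub_step {N : ℕ} (hN : 0 < N) {β : ℝ → ℂ} {B : ℕ → ℂ}
    (hβ : ∀ u < N, ∀ x ∈ Set.Ico ((u : ℝ) / N) (((u + 1 : ℕ) : ℝ) / N), β x = B u) :
    ∫ x in Set.Ico (0 : ℝ) 1, ∫ y in Set.Ico (0 : ℝ) 1,
        |x - y| * (starRingEnd ℂ) (β x) * β y =
      (∑ u ∈ Finset.range N, ∑ v ∈ Finset.range N,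
          ((|(u : ℝ) - v| : ℝ) : ℂ) * ((starRingEnd ℂ) (B u) * B v) +
        ∑ u ∈ Finset.range N, (starRingEnd ℂ) (B u) * B u / 3) / (N : ℂ) ^ 3 := by
  have hinner : ∀ x : ℝ, ∫ y in Set.Ico (0 : ℝ) 1, (|x - y| : ℝ) * (starRingEnd ℂ) (β x) * β y =
      ∑ v ∈ Finset.range N, (starRingEnd ℂ) (β x) * B v *
        ((∫ y in ((v : ℝ) / N)..(((v + 1 : ℕ) : ℝ) / N), |x - y| : ℝ) : ℂ) := by
    intro x
    rw [setIntegral_Ico_eq_sum_blocks hN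
      (g := fun v y => (starRingEnd ℂ) (β x) * B v * ((|x - y| : ℝ) : ℂ))
      (fun v => by fun_prop) (fun v hv y hy => by rw [hβ v hv y hy]; ring)]
    refine Finset.sum_congr rfl fun v _ => ?_
    rw [intervalIntegral.integral_const_mul, intervalIntegral.integral_ofReal]
  have hcont : ∀ (z : ℂ) (v : ℕ), Continuous fun x : ℝ =>
      z * ((∫ y in ((v : ℝ) / N)..(((v + 1 : ℕ) : ℝ) / N), |x - y| : ℝ) : ℂ) := by
    intro z v
    simp only [integral_abs_sub]
    fun_prop
  simp only [hinner]
  rw [setIntegral_Ico_eq_sum_blocks hN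
      (g := fun u x => ∑ v ∈ Finset.range N, (starRingEnd ℂ) (B u) * B v *
        ((∫ y in ((v : ℝ) / N)..(((v + 1 : ℕ) : ℝ) / N), |x - y| : ℝ) : ℂ))
      (fun u => continuous_finsetSum _ fun v _ => hcont _ v)
      (fun u hu x hx => by rw [hβ u hu x hx]), ← Finset.sum_add_distrib, Finset.sum_div]
  refine Finset.sum_congr rfl fun u hu => ?_
  rw [intervalIntegral.integral_finsetSum fun v _ =>
    (hcont _ v).intervalIntegrable _ _]
  have hdiag : (starRingEnd ℂ) (B u) * B u / 3 = ∑ v ∈ Finset.range N,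
      if u = v then (starRingEnd ℂ) (B u) * B v / 3 else 0 := by
    rw [Finset.sum_ite_eq, if_pos hu]
  rw [hdiag, ← Finset.sum_add_distrib, Finset.sum_div]
  refine Finset.sum_congr rfl fun v _ => ?_
  rw [intervalIntegral.integral_const_mul, intervalIntegral.integral_ofReal,
    integral_integral_abs_sub_blocks hN]
  split_ifs <;> push_cast <;> ring

theorem padBeta_eq_on_block {p : ℕ} [hp : Fact p.Prime] (k : ℕ) (u : ℕ) {x : ℝ}
    (hx : x ∈ Set.Ico ((u : ℝ) / (p ^ (Nat.log p k + 1) : ℕ))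
      (((u + 1 : ℕ) : ℝ) / (p ^ (Nat.log p k + 1) : ℕ))) :
    padBeta p k x =
      Complex.exp ((2 * Real.pi * (radInv p k * digitReverse p (Nat.log p k) (u / p)) : ℝ) *
        Complex.I) *
      Complex.exp (2 * Real.pi * Complex.I * ((k / p ^ Nat.log p k : ℕ) / p)) ^ (u % p) := by
  have hN : (0 : ℝ) < (p ^ (Nat.log p k + 1) : ℕ) := by exact_mod_cast pow_pos hp.out.pos _
  have h1 := (div_le_iff₀ hN).1 hx.1
  have h2 := (lt_div_iff₀ hN).1 hx.2
  push_cast at h1 h2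
  refine padBeta_eq (Nat.mod_lt _ hp.out.pos) ?_
  rw [Nat.div_add_mod', Nat.floor_eq_iff ((Nat.cast_nonneg u).trans h1)]
  exact ⟨h1, h2⟩

theorem integral_abs_sub_beta (p : ℕ) [hp : Fact p.Prime] (k : ℕ) (hk : 1 ≤ k) :
    ∫ x in Set.Ico (0:ℝ) 1, ∫ y in Set.Ico (0:ℝ) 1,
        |x - y| * (starRingEnd ℂ) (padBeta p k x) * padBeta p k y
      = (1 / (p : ℂ) ^ (2 * (Nat.log p k + 1))) *
          ((1 : ℂ) / 3 -
            1 / (Real.sin ((k / p ^ Nat.log p k : ℕ) * Real.pi / p) : ℂ) ^ 2) := by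
  have hp0 : (p : ℝ) ≠ 0 := by exact_mod_cast hp.out.ne_zero
  set m := Nat.log p k with hm
  set κ := k / p ^ m with hκ
  have hκ0 : 0 < κ := Nat.div_pos (Nat.pow_log_le_self p (by omega)) (pow_pos hp.out.pos _)
  have hκp : κ < p :=
    Nat.div_lt_of_lt_mul (by rw [← pow_succ]; exact Nat.lt_pow_succ_log_self hp.out.one_lt k)
  have hsin : Real.sin (κ * Real.pi / p) ≠ 0 := by
    have hpos : (0 : ℝ) < p := by exact_mod_cast hp.out.pos
    have hκ0' : (0 : ℝ) < κ := by exact_mod_cast hκ0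
    have hκp' : (κ : ℝ) < p := by exact_mod_cast hκp
    refine (Real.sin_pos_of_pos_of_lt_pi (by positivity) ?_).ne'
    rw [div_lt_iff₀ hpos, mul_comm]
    exact mul_lt_mul_of_pos_left hκp' Real.pi_pos
  set s : ℂ := (Real.sin (κ * Real.pi / p) : ℂ) with hs
  have hs0 : s ≠ 0 := Complex.ofReal_ne_zero.2 hsin
  set ω : ℂ := Complex.exp (2 * Real.pi * Complex.I * (κ / p)) with hωdef
  have hω_eq : ω = Complex.exp (2 * ((κ * Real.pi / p : ℝ) : ℂ) * Complex.I) := by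
    rw [hωdef]; congr 1; push_cast; ring
  have hω0 : ω ≠ 0 := Complex.exp_ne_zero _
  have hsq : (ω - 1) ^ 2 = -4 * s ^ 2 * ω := by
    rw [hω_eq, exp_two_mul_mul_I_sub_one_sq, hs, Complex.ofReal_sin]
  have hω1 : ω ≠ 1 := by
    intro h
    rw [h] at hsq
    exact hs0 (by simpa using hsq)
  have hωp : ω ^ p = 1 := by
    have hpc : (p : ℂ) ≠ 0 := by exact_mod_cast hp0
    rw [hωdef, ← Complex.exp_nat_mul, ← Complex.exp_nat_mul_two_pi_mul_I κ]
    congr 1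
    field_simp
  have hωn : ‖ω‖ = 1 := by
    rw [hω_eq, ← Complex.ofReal_ofNat, ← Complex.ofReal_mul, Complex.norm_exp_ofReal_mul_I]
  set A : ℕ → ℂ := fun q =>
    Complex.exp ((2 * Real.pi * (radInv p k * digitReverse p m q) : ℝ) * Complex.I)
  have hA : ∀ q, ‖A q‖ = 1 := fun q => Complex.norm_exp_ofReal_mul_I _
  set B : ℕ → ℂ := fun u => A (u / p) * ω ^ (u % p) with hBdef
  have hB : ∀ q, ∀ c < p, B (q * p + c) = A q * ω ^ c := by
    intro q c hc
    simp only [hBdef]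
    rw [mul_comm q p, Nat.mul_add_div hp.out.pos, Nat.div_eq_of_lt hc, add_zero, Nat.mul_add_mod,
      Nat.mod_eq_of_lt hc]
  have hBn : ∀ u, (starRingEnd ℂ) (B u) * B u = 1 := by
    intro u
    rw [Complex.conj_mul', norm_mul, norm_pow, hA, hωn]
    simp
  rw [integral_integral_abs_sub_step (pow_pos hp.out.pos (m + 1))
    (fun u _ x hx => padBeta_eq_on_block k u hx)]
  change (∑ u ∈ Finset.range (p ^ m * p), ∑ v ∈ Finset.range (p ^ m * p),
    ((|(u : ℝ) - v| : ℝ) : ℂ) * ((starRingEnd ℂ) (B u) * B v) +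
      ∑ u ∈ Finset.range (p ^ (m + 1)), (starRingEnd ℂ) (B u) * B u / 3) /
        ((p ^ (m + 1) : ℕ) : ℂ) ^ 3 = _
  rw [sum_sum_abs_sub_conj_mul hω1 hωp hωn hA hB, hsq]
  simp only [hBn, Finset.sum_const, Finset.card_range, nsmul_eq_mul]
  have hpc : (p : ℂ) ≠ 0 := by exact_mod_cast hp0
  push_cast
  field_simp
  ring
end

section
/- The functions β_k : [0,1) → ℂ, k ∈ ℕ₀, defined by β_k(x) = e^{2πi φ_p(k) φ_p^+(x)} (pairing a p-adic number with the fractional value φ_p(k), taken modulo 1), form an orthonormal system in L²([0,1]): ∫₀¹ β_k(x) conj(β_l(x)) dx = 1 if k = l and 0 otherwise. -/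
/-- The natural number obtained by reversing the first `A` base-`p` digits of `m`. -/
def digitRev (p A m : ℕ) : ℕ := ∑ r ∈ Finset.range A, m / p ^ r % p * p ^ (A - 1 - r)

lemma digitRev_succ (p A m : ℕ) :
    digitRev p (A + 1) m = digitRev p A (m / p) + m % p * p ^ A := by
  unfold digitRev
  rw [Finset.sum_range_succ']
  congr 1
  · refine Finset.sum_congr rfl fun r _ => ?_
    rw [Nat.div_div_eq_div_mul, ← pow_succ']
    congr 2
    omega
  · simp

lemma sum_mul_pow_lt {p : ℕ} {d : ℕ → ℕ} (hd : ∀ r, d r < p) (n : ℕ) :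
    ∑ r ∈ Finset.range n, d r * p ^ r < p ^ n := by
  induction n with
  | zero => simp
  | succ n ih =>
    rw [Finset.sum_range_succ, pow_succ']
    have := Nat.mul_le_mul_right (p ^ n) (Nat.succ_le_of_lt (hd n))
    rw [Nat.succ_mul] at this
    omega

lemma digitRev_eq_sum (p A m : ℕ) :
    digitRev p A m = ∑ r ∈ Finset.range A, m / p ^ (A - 1 - r) % p * p ^ r := by
  rw [digitRev, ← Finset.sum_range_reflect]
  refine Finset.sum_congr rfl fun r hr => ?_
  rw [Finset.mem_range] at hr
  congr 2
  omega

lemma digitRev_lt {p : ℕ} (hp : 0 < p) (A m : ℕ) : digitRev p A m < p ^ A := by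
  rw [digitRev_eq_sum]
  exact sum_mul_pow_lt (fun _ => Nat.mod_lt _ hp) A

lemma digitRev_inj {p : ℕ} (hp : 0 < p) {A m n : ℕ} (hm : m < p ^ A) (hn : n < p ^ A)
    (h : digitRev p A m = digitRev p A n) : m = n := by
  induction A generalizing m n with
  | zero => simp at hm hn; omega
  | succ A ih =>
    rw [digitRev_succ, digitRev_succ] at h
    have hpA : 0 < p ^ A := Nat.pow_pos hp
    have h1 := congrArg (· % p ^ A) h
    have h2 := congrArg (· / p ^ A) h
    simp only [Nat.add_mul_mod_self_right, Nat.mod_eq_of_lt (digitRev_lt hp _ _)] at h1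
    simp only [Nat.add_mul_div_right _ _ hpA, Nat.div_eq_of_lt (digitRev_lt hp _ _),
      zero_add] at h2
    rw [pow_succ'] at hm hn
    have h3 := ih (Nat.div_lt_of_lt_mul hm) (Nat.div_lt_of_lt_mul hn) h1
    rw [← Nat.div_add_mod m p, ← Nat.div_add_mod n p, h2, h3]

lemma sum_range_digitRev {M : Type*} [AddCommMonoid M] {p : ℕ} (hp : 0 < p) (A : ℕ)
    (f : ℕ → M) :
    ∑ m ∈ Finset.range (p ^ A), f (digitRev p A m) = ∑ n ∈ Finset.range (p ^ A), f n := by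
  have hmaps : Set.MapsTo (digitRev p A) (Finset.range (p ^ A)) (Finset.range (p ^ A)) :=
    fun m _ => by simpa using digitRev_lt hp A m
  have hinj : Set.InjOn (digitRev p A) (Finset.range (p ^ A)) := fun m hm n hn h =>
    digitRev_inj hp (by simpa using hm) (by simpa using hn) h
  have himg : (Finset.range (p ^ A)).image (digitRev p A) = Finset.range (p ^ A) :=
    Finset.eq_of_subset_of_card_le (Finset.image_subset_iff.2 hmaps)
      (Finset.card_image_of_injOn hinj).ge
  conv_rhs => rw [← himg, Finset.sum_image hinj]

lemma radInv_eq_digitRev_div {p : ℕ} (hp : 1 < p) {k A : ℕ} (hA : Nat.log p k + 1 ≤ A) :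
    radInv p k = digitRev p A k / (p : ℝ) ^ A := by
  have hp0 : (p : ℝ) ≠ 0 := by positivity
  rw [radInv, digitRev, Nat.cast_sum, Finset.sum_div]
  rw [Finset.sum_subset (Finset.range_mono hA)]
  · refine Finset.sum_congr rfl fun i hi => ?_
    rw [Finset.mem_range] at hi
    obtain ⟨j, rfl⟩ : ∃ j, A = i + 1 + j := ⟨A - (i + 1), by omega⟩
    rw [show i + 1 + j - 1 - i = j by omega, Nat.cast_mul, Nat.cast_pow, pow_add _ (i + 1) j]
    field_simp
  · intro i _ hi
    rw [Finset.mem_range, not_lt] at hi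
    rw [Nat.div_eq_of_lt (Nat.lt_pow_of_log_lt hp (by omega))]
    simp

lemma appr_tsum_digits {p : ℕ} [Fact p.Prime] {d : ℕ → ℕ} (hd : ∀ r, d r < p) (n : ℕ) :
    (∑' r : ℕ, (d r : ℤ_[p]) * (p : ℤ_[p]) ^ r).appr n
      = ∑ r ∈ Finset.range n, d r * p ^ r := by
  have hp1 : 1 < (p : ℝ) := by exact_mod_cast (Fact.out : p.Prime).one_lt
  have hbound : ∀ e : ℕ → ℕ, Summable fun r : ℕ => (e r : ℤ_[p]) * (p : ℤ_[p]) ^ r := by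
    intro e
    refine Summable.of_norm_bounded
      (summable_geometric_of_lt_one (by positivity) (inv_lt_one_of_one_lt₀ hp1)) fun r => ?_
    rw [norm_mul, norm_pow, PadicInt.norm_p]
    exact mul_le_of_le_one_left (by positivity) (PadicInt.norm_le_one _)
  have hmem : (∑' r : ℕ, (d r : ℤ_[p]) * (p : ℤ_[p]) ^ r)
      - ((∑ r ∈ Finset.range n, d r * p ^ r : ℕ) : ℤ_[p]) ∈ Ideal.span {(p : ℤ_[p]) ^ n} := by
    rw [← (hbound d).sum_add_tsum_nat_add n, Ideal.mem_span_singleton]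
    push_cast
    rw [add_sub_cancel_left]
    refine ⟨∑' r : ℕ, (d (r + n) : ℤ_[p]) * (p : ℤ_[p]) ^ r, ?_⟩
    rw [← (hbound fun r => d (r + n)).tsum_mul_left]
    refine tsum_congr fun r => ?_
    rw [pow_add]
    ring
  have h := PadicInt.zmod_congr_of_sub_mem_span n _ _ _ (PadicInt.appr_spec n _) hmem
  rw [ZMod.natCast_eq_natCast_iff] at h
  exact Nat.ModEq.eq_of_lt_of_lt h (PadicInt.appr_lt _ _) (sum_mul_pow_lt hd n)

lemma padDigit_eq_of_lt {p : ℕ} (hp : 0 < p) {x : ℝ} {A r : ℕ} (hr : r < A) :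
    padDigit p x r = ⌊x * (p : ℝ) ^ A⌋₊ / p ^ (A - 1 - r) % p := by
  have hp0 : (p : ℝ) ≠ 0 := by positivity
  obtain ⟨j, rfl⟩ : ∃ j, A = r + 1 + j := ⟨A - (r + 1), by omega⟩
  rw [padDigit, Int.floor_toNat, show r + 1 + j - 1 - r = j by omega, ← Nat.floor_div_natCast,
    Nat.cast_pow, pow_add _ (r + 1) j, ← mul_assoc, mul_div_cancel_right₀ _ (pow_ne_zero _ hp0)]

lemma padBeta_eq_exp {p : ℕ} [Fact p.Prime] {k A : ℕ} (hA : Nat.log p k + 1 ≤ A) (x : ℝ) :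
    padBeta p k x = Complex.exp (2 * Real.pi * Complex.I *
      (digitRev p A k * digitRev p A ⌊x * (p : ℝ) ^ A⌋₊ / (p : ℂ) ^ A)) := by
  have hp : p.Prime := Fact.out
  have hpC : (p : ℂ) ≠ 0 := by exact_mod_cast hp.ne_zero
  have hd : ∀ r, padDigit p x r < p := fun r => Nat.mod_lt _ hp.pos
  have hrev : digitRev p A ⌊x * (p : ℝ) ^ A⌋₊
      = ∑ r ∈ Finset.range A, padDigit p x r * p ^ r := by
    rw [digitRev_eq_sum]
    refine Finset.sum_congr rfl fun r hr => ?_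
    rw [padDigit_eq_of_lt hp.pos (Finset.mem_range.1 hr)]
  obtain ⟨t, ht⟩ : ∃ t, ∑ r ∈ Finset.range A, padDigit p x r * p ^ r
      = ∑ r ∈ Finset.range (Nat.log p k + 1), padDigit p x r * p ^ r
        + p ^ (Nat.log p k + 1) * t := by
    obtain ⟨j, rfl⟩ := Nat.exists_eq_add_of_le hA
    refine ⟨∑ r ∈ Finset.range j, padDigit p x (Nat.log p k + 1 + r) * p ^ r, ?_⟩
    rw [Finset.sum_range_add, Finset.mul_sum]
    congr 1
    refine Finset.sum_congr rfl fun r _ => ?_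
    rw [pow_add]
    ring
  have hK : (digitRev p A k : ℂ) / (p : ℂ) ^ A
      = digitRev p (Nat.log p k + 1) k / (p : ℂ) ^ (Nat.log p k + 1) := by
    have h := congrArg (fun y : ℝ => (y : ℂ)) ((radInv_eq_digitRev_div hp.one_lt hA).symm.trans
      (radInv_eq_digitRev_div hp.one_lt le_rfl))
    push_cast at h
    exact h
  rw [padBeta, padChar, phiPlus, appr_tsum_digits hd, hrev, ht,
    radInv_eq_digitRev_div hp.one_lt le_rfl, Complex.exp_eq_exp_iff_exists_int]
  refine ⟨-(digitRev p (Nat.log p k + 1) k * t : ℕ), ?_⟩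
  rw [mul_div_right_comm, hK]
  push_cast
  field_simp
  ring

lemma setIntegral_natFloor_mul (f : ℕ → ℂ) {q : ℕ} (hq : 0 < q) :
    ∫ x in Set.Ico (0 : ℝ) 1, f ⌊x * q⌋₊ = (∑ m ∈ Finset.range q, f m) / q := by
  have hq' : (0 : ℝ) < q := by exact_mod_cast hq
  have hfloor : ∀ m : ℕ, ∀ x ∈ Set.Ico ((m : ℝ) / q) ((m + 1 : ℝ) / q), ⌊x * q⌋₊ = m := by
    rintro m x ⟨h1, h2⟩
    rw [div_le_iff₀ hq'] at h1
    rw [lt_div_iff₀ hq'] at h2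
    exact (Nat.floor_eq_iff ((Nat.cast_nonneg m).trans h1)).2 ⟨h1, h2⟩
  have hcover : Set.Ico (0 : ℝ) 1
      = ⋃ m ∈ Finset.range q, Set.Ico ((m : ℝ) / q) ((m + 1 : ℝ) / q) := by
    ext x
    simp only [Set.mem_iUnion, Finset.mem_range, exists_prop]
    constructor
    · rintro ⟨h0, h1⟩
      refine ⟨⌊x * q⌋₊, ?_, ?_, ?_⟩
      · rw [Nat.floor_lt (by positivity)]
        nlinarith
      · rw [div_le_iff₀ hq']
        exact Nat.floor_le (by positivity)
      · rw [lt_div_iff₀ hq']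
        exact Nat.lt_floor_add_one _
    · rintro ⟨m, hm, h0, h1⟩
      refine ⟨le_trans (by positivity) h0, h1.trans_le ?_⟩
      rw [div_le_one hq']
      exact_mod_cast hm
  rw [hcover, MeasureTheory.integral_biUnion_finset _ (fun _ _ => measurableSet_Ico),
    Finset.sum_div]
  · refine Finset.sum_congr rfl fun m _ => ?_
    rw [MeasureTheory.setIntegral_congr_fun measurableSet_Ico
      (g := fun _ => f m) fun x hx => by simp only [hfloor m x hx]]
    rw [MeasureTheory.setIntegral_const, Real.volume_real_Ico_of_le (by gcongr; simp),
      ← sub_div, add_sub_cancel_left, Complex.real_smul]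
    push_cast
    ring
  · intro m _ n _ hmn
    exact Set.disjoint_left.2 fun x hx hx' => hmn ((hfloor m x hx).symm.trans (hfloor n x hx'))
  · intro m _
    refine MeasureTheory.IntegrableOn.congr_fun (f := fun _ => f m) ?_
      (fun x hx => by simp only [hfloor m x hx]) measurableSet_Ico
    exact MeasureTheory.integrableOn_const (by simp)

lemma sum_range_exp_sub_mul_div {N K L : ℕ} (hK : K < N) (hL : L < N) :
    ∑ n ∈ Finset.range N, Complex.exp (2 * Real.pi * Complex.I * (((K : ℂ) - L) * n / N))
      = if K = L then (N : ℂ) else 0 := by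
  split_ifs with h
  · simp [h]
  · have hN : (N : ℂ) ≠ 0 := by exact_mod_cast (by omega : N ≠ 0)
    set ζ := Complex.exp (2 * Real.pi * Complex.I * (((K : ℂ) - L) / N)) with hζ
    have hpow : ∀ n : ℕ,
        Complex.exp (2 * Real.pi * Complex.I * (((K : ℂ) - L) * n / N)) = ζ ^ n := by
      intro n
      rw [hζ, ← Complex.exp_nat_mul]
      congr 1
      ring
    have hN1 : ζ ^ N = 1 := by
      rw [← hpow, Complex.exp_eq_one_iff]
      refine ⟨(K : ℤ) - L, ?_⟩
      push_cast
      field_simp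
    have hne : ζ ≠ 1 := by
      intro h1
      obtain ⟨t, ht⟩ := Complex.exp_eq_one_iff.1 h1
      have hpi : (2 * Real.pi * Complex.I : ℂ) ≠ 0 := Complex.two_pi_I_ne_zero
      rw [mul_comm (t : ℂ)] at ht
      have h2 := mul_left_cancel₀ hpi ht
      rw [div_eq_iff hN] at h2
      have h3 : (K : ℤ) - L = t * N := by exact_mod_cast h2
      have h4 : (K : ℤ) - L = 0 :=
        Int.eq_zero_of_abs_lt_dvd ⟨t, h3.trans (mul_comm _ _)⟩ (by rw [abs_lt]; omega)
      omega
    simp only [hpow]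
    rw [geom_sum_eq hne, hN1, sub_self, zero_div]

theorem padBeta_orthonormal (p : ℕ) [hp : Fact p.Prime] (k l : ℕ) :
    ∫ x in Set.Ico (0:ℝ) 1, padBeta p k x * (starRingEnd ℂ) (padBeta p l x)
      = if k = l then 1 else 0 := by
  have hp' : p.Prime := hp.out
  set A := max (Nat.log p k + 1) (Nat.log p l + 1)
  have hkA : Nat.log p k + 1 ≤ A := le_max_left _ _
  have hlA : Nat.log p l + 1 ≤ A := le_max_right _ _
  have hk : k < p ^ A := Nat.lt_pow_of_log_lt hp'.one_lt hkA
  have hl : l < p ^ A := Nat.lt_pow_of_log_lt hp'.one_lt hlA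
  have hprod : ∀ x : ℝ, padBeta p k x * (starRingEnd ℂ) (padBeta p l x)
      = Complex.exp (2 * Real.pi * Complex.I * (((digitRev p A k : ℂ) - digitRev p A l)
        * digitRev p A ⌊x * (p ^ A : ℕ)⌋₊ / (p ^ A : ℕ))) := by
    intro x
    rw [padBeta_eq_exp hkA, padBeta_eq_exp hlA, ← Complex.exp_conj, ← Complex.exp_add]
    congr 1
    simp only [map_mul, map_div₀, map_pow, Complex.conj_I, Complex.conj_ofReal, map_natCast,
      map_ofNat, Nat.cast_pow]
    ring
  simp only [hprod]
  have hN : ((p ^ A : ℕ) : ℂ) ≠ 0 := by exact_mod_cast (pow_pos hp'.pos A).ne'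
  rw [setIntegral_natFloor_mul (fun m => Complex.exp (2 * Real.pi * Complex.I *
      (((digitRev p A k : ℂ) - digitRev p A l) * digitRev p A m / (p ^ A : ℕ))))
      (pow_pos hp'.pos A),
    sum_range_digitRev hp'.pos A (fun n => Complex.exp (2 * Real.pi * Complex.I *
      (((digitRev p A k : ℂ) - digitRev p A l) * n / (p ^ A : ℕ)))),
    sum_range_exp_sub_mul_div (digitRev_lt hp'.pos A k) (digitRev_lt hp'.pos A l)]
  by_cases h : k = l
  · rw [if_pos (congrArg _ h), if_pos h, div_self hN]
  · rw [if_neg fun h' => h (digitRev_inj hp'.pos hk hl h'), if_neg h, zero_div]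
end
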